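/- Assume that P is hierarchical and that H satisfies Condition (C). Then H satisfies the MacWilliams extension property for (P, ω)-weight if and only if all of the following hold: H satisfies Condition (A); (H, P) satisfies Condition (B); (H, (P,ω)) satisfies Condition (D); and for every r ∈ [1, m] and every b ∈ ω[W_r], the product module ∏_{i ∈ W_r, ω(i)=b} H_i satisfies the MacWilliams extension property for Hamming weight. -/

import Mathlib

def idl {Ω : Type*} [PartialOrder Ω] (B : Set Ω) : Set Ω := {a | ∃ b ∈ B, a ≤ b}

def IsIdl {Ω : Type*} [PartialOrder Ω] (I : Set Ω) : Prop := ∀ a b : Ω, a ≤ b → b ∈ I → a ∈ I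

noncomputable def lenP {Ω : Type*} [PartialOrder Ω] (y : Ω) : ℕ :=
  sSup {n : ℕ | ∃ c : Finset Ω, IsChain (· ≤ ·) (c : Set Ω) ∧ y ∈ c ∧ (∀ x ∈ c, x ≤ y) ∧ c.card = n}

def UDP {Ω : Type*} [PartialOrder Ω] (ω : Ω → ℝ) : Prop :=
  ∀ I J : Set Ω, IsIdl I → IsIdl J → (∑ᶠ i ∈ I, ω i) = (∑ᶠ j ∈ J, ω j) →
    ∃ lam : Ω ≃o Ω, J = lam '' I ∧ ∀ i : Ω, ω (lam i) = ω i

def hsupp {Ω : Type*} {H : Ω → Type*} [∀ i, Zero (H i)] (β : ∀ i, H i) : Set Ω :=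
  {i | β i ≠ 0}

noncomputable def wtw {Ω : Type*} [PartialOrder Ω] {H : Ω → Type*} [∀ i, Zero (H i)]
    (ω : Ω → ℝ) (β : ∀ i, H i) : ℝ :=
  ∑ᶠ i ∈ idl (hsupp β), ω i

def CondA (S : Type*) [Ring S] {Ω : Type*} (H : Ω → Type*)
    [∀ i, AddCommGroup (H i)] [∀ i, Module S (H i)] : Prop :=
  ∀ i : Ω, ∀ B : Submodule S (H i), ∀ h : B →ₗ[S] H i, Function.Injective h →
    ∃ τ : H i ≃ₗ[S] H i, ∀ b : B, τ b = h b

def CondB (S : Type*) [Ring S] {Ω : Type*} [PartialOrder Ω] (H : Ω → Type*)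
    [∀ i, AddCommGroup (H i)] [∀ i, Module S (H i)] : Prop :=
  ∀ k l : Ω, k ≤ l → k ≠ l →
    ∀ A : Submodule S (H l), ∀ f : A →ₗ[S] H k, ∃ g : H l →ₗ[S] H k, ∀ a : A, g a = f a

def CondC (S : Type*) [Ring S] {Ω : Type*} (H : Ω → Type*)
    [∀ i, AddCommGroup (H i)] [∀ i, Module S (H i)] : Prop :=
  ∃ ξ : ∀ i, H i, ξ ≠ 0 ∧ ∀ k l : Ω, ∀ a : S, a • ξ k = 0 ↔ a • ξ l = 0

def CondD (S : Type*) [Ring S] {Ω : Type*} [PartialOrder Ω] (H : Ω → Type*)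
    [∀ i, AddCommGroup (H i)] [∀ i, Module S (H i)] (ω : Ω → ℝ) : Prop :=
  UDP ω ∧ ∀ u v : Ω, lenP u = lenP v → ω u = ω v → Nonempty (H u ≃ₗ[S] H v)

def MEPweight (S : Type*) [Ring S] {Ω : Type*} [PartialOrder Ω] (H : Ω → Type*)
    [∀ i, AddCommGroup (H i)] [∀ i, Module S (H i)] (ω : Ω → ℝ) : Prop :=
  ∀ C : Submodule S (∀ i, H i), ∀ f : C →ₗ[S] (∀ i, H i),
    (∀ x : C, wtw ω (f x) = wtw ω (x : ∀ i, H i)) →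
    ∃ φ : (∀ i, H i) ≃ₗ[S] (∀ i, H i),
      (∀ α : ∀ i, H i, wtw ω (φ α) = wtw ω α) ∧ ∀ x : C, φ (x : ∀ i, H i) = f x

noncomputable def maxChainCard (Ω : Type*) [PartialOrder Ω] : ℕ :=
  sSup {n : ℕ | ∃ c : Finset Ω, IsChain (· ≤ ·) (c : Set Ω) ∧ c.card = n}

def Hierarchical (Ω : Type*) [PartialOrder Ω] : Prop :=
  ∀ u v : Ω, lenP u + 1 ≤ lenP v → u ≤ v

/-- Hamming weight on a finite product of modules. -/
noncomputable def hwtPi {ι : Type*} {N : ι → Type*} [∀ j, Zero (N j)] (x : ∀ j, N j) : ℕ :=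
  Set.ncard {j | x j ≠ 0}

/-- The MacWilliams extension property for Hamming weight. -/
def MEPHam (S : Type*) [Ring S] {ι : Type*} (N : ι → Type*)
    [∀ j, AddCommGroup (N j)] [∀ j, Module S (N j)] : Prop :=
  ∀ C : Submodule S (∀ j, N j), ∀ f : C →ₗ[S] (∀ j, N j),
    (∀ x : C, hwtPi (f x) = hwtPi (x : ∀ j, N j)) →
    ∃ ψ : (∀ j, N j) ≃ₗ[S] (∀ j, N j),
      (∀ α : ∀ j, N j, hwtPi (ψ α) = hwtPi α) ∧ ∀ x : C, ψ (x : ∀ j, N j) = f x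

section Aux

lemma factor_aux {S M N E : Type*} [Ring S] [AddCommGroup M] [Module S M] [AddCommGroup N] [Module S N]
    [AddCommGroup E] [Module S E] (p : M →ₗ[S] N) (q : M →ₗ[S] E)
    (h : ∀ m, p m = 0 → q m = 0) :
    ∃ g : LinearMap.range p →ₗ[S] E, ∀ m, g ⟨p m, LinearMap.mem_range_self p m⟩ = q m := by
  have hk : LinearMap.ker p ≤ LinearMap.ker q := fun m hm => h m hm
  refine ⟨((LinearMap.ker p).liftQ q hk).comp p.quotKerEquivRange.symm.toLinearMap, fun m => ?_⟩
  have : p.quotKerEquivRange.symm ⟨p m, LinearMap.mem_range_self p m⟩ = (LinearMap.ker p).mkQ m := by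
    rw [LinearEquiv.symm_apply_eq]
    rfl
  simp only [LinearMap.comp_apply, LinearEquiv.coe_coe, this]
  simp

lemma relinj_pi {S E ι : Type*} [Ring S] [AddCommGroup E] [Module S E] [Finite ι]
    (M : ι → Type*) [∀ i, AddCommGroup (M i)] [∀ i, Module S (M i)]
    (h : ∀ i, ∀ A : Submodule S (M i), ∀ f : A →ₗ[S] E, ∃ g : M i →ₗ[S] E, ∀ a : A, g a = f a)
    (A : Submodule S (∀ i, M i)) (f : A →ₗ[S] E) :
    ∃ g : (∀ i, M i) →ₗ[S] E, ∀ a : A, g a = f a := by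
  classical
  have := Fintype.ofFinite ι
  have key : ∀ s : Finset ι, ∃ F : (∀ i, M i) →ₗ.[S] E, (⟨A, f⟩ : (∀ i, M i) →ₗ.[S] E) ≤ F ∧
      ∀ i ∈ s, ∀ m : M i, Pi.single i m ∈ F.domain := by
    intro s
    induction s using Finset.induction_on with
    | empty => exact ⟨⟨A, f⟩, le_rfl, by simp⟩
    | insert i s his ih =>
      obtain ⟨F, hF, hs⟩ := ih
      obtain ⟨g, hg⟩ := h i (F.domain.comap (LinearMap.single S M i))
        (F.toFun.comp ((LinearMap.single S M i).restrict (fun x hx => hx)))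
      let G : (∀ i, M i) →ₗ.[S] E := ⟨LinearMap.range (LinearMap.single S M i),
        (g.comp (LinearMap.proj i)).domRestrict _⟩
      have hag : ∀ (x : F.domain) (y : G.domain), (x : ∀ i, M i) = y → F x = G y := by
        rintro ⟨x, hx⟩ ⟨y, m, rfl⟩ hxy
        simp only at hxy
        subst hxy
        have := hg ⟨m, hx⟩
        change _ = g ((LinearMap.single S M i m) i)
        simp only [LinearMap.coe_single, Pi.single_eq_same]
        rw [this]
        rfl
      refine ⟨F.sup G hag, hF.trans (LinearPMap.left_le_sup _ _ _), ?_⟩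
      intro j hj m
      rcases Finset.mem_insert.1 hj with rfl | hj
      · exact (LinearPMap.right_le_sup F G hag).1 ⟨m, rfl⟩
      · exact (LinearPMap.left_le_sup F G hag).1 (hs j hj m)
  obtain ⟨F, hF, hs⟩ := key Finset.univ
  have htop : ∀ x, x ∈ F.domain := by
    intro x
    rw [← Finset.univ_sum_single x]
    exact Submodule.sum_mem _ fun i _ => hs i (Finset.mem_univ _) _
  refine ⟨F.toFun.comp (LinearMap.id.codRestrict F.domain htop), fun a => ?_⟩
  exact (hF.2 (x := a) (y := ⟨a, htop a⟩) rfl).symm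

lemma blockEquiv {S V X Y : Type*} [Ring S] [AddCommGroup V] [Module S V] [AddCommGroup X] [Module S X]
    [AddCommGroup Y] [Module S Y] (φ : V ≃ₗ[S] V) (N : V → Prop)
    (ι : X →ₗ[S] V) (π : V →ₗ[S] X) (ι' : Y →ₗ[S] V) (π' : V →ₗ[S] Y)
    (h1 : ∀ x, π (ι x) = x) (h2 : ∀ y, π' (ι' y) = y)
    (hN1 : ∀ v, N v → N (φ v)) (hN2 : ∀ v, N v → N (φ.symm v))
    (hπ : ∀ v, N v → π v = 0) (hπ' : ∀ v, N v → π' v = 0)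
    (h3 : ∀ x, N (φ (ι x) - ι' (π' (φ (ι x)))))
    (h4 : ∀ y, N (φ.symm (ι' y) - ι (π (φ.symm (ι' y))))) :
    ∃ τ : X ≃ₗ[S] Y, ∀ x, τ x = π' (φ (ι x)) := by
  refine ⟨LinearEquiv.ofLinearMap (π' ∘ₗ φ.toLinearMap ∘ₗ ι) (π ∘ₗ φ.symm.toLinearMap ∘ₗ ι') ?_ ?_,
    fun x => rfl⟩
  · ext y
    have := hπ' _ (hN1 _ (h4 y))
    simp only [map_sub, LinearEquiv.apply_symm_apply, h2] at this
    simp only [LinearMap.comp_apply, LinearEquiv.coe_coe, LinearMap.id_apply]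
    exact (sub_eq_zero.1 this).symm
  · ext x
    have := hπ _ (hN2 _ (h3 x))
    simp only [map_sub, LinearEquiv.symm_apply_apply, h1] at this
    simp only [LinearMap.comp_apply, LinearEquiv.coe_coe, LinearMap.id_apply]
    exact (sub_eq_zero.1 this).symm

variable {Ω : Type*} [Fintype Ω] [PartialOrder Ω]

lemma lenP_bdd (y : Ω) : BddAbove {n : ℕ | ∃ c : Finset Ω, IsChain (· ≤ ·) (c : Set Ω) ∧ y ∈ c ∧
    (∀ x ∈ c, x ≤ y) ∧ c.card = n} := by
  refine ⟨Fintype.card Ω, ?_⟩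
  rintro n ⟨c, -, -, -, rfl⟩
  exact Finset.card_le_univ c

lemma lenP_le (y : Ω) (c : Finset Ω) (hc : IsChain (· ≤ ·) (c : Set Ω)) (hy : y ∈ c)
    (hle : ∀ x ∈ c, x ≤ y) : c.card ≤ lenP y :=
  le_csSup (lenP_bdd y) ⟨c, hc, hy, hle, rfl⟩

lemma lenP_mem (y : Ω) : ∃ c : Finset Ω, IsChain (· ≤ ·) (c : Set Ω) ∧ y ∈ c ∧
    (∀ x ∈ c, x ≤ y) ∧ c.card = lenP y :=
  Nat.sSup_mem (s := {n : ℕ | ∃ c : Finset Ω, IsChain (· ≤ ·) (c : Set Ω) ∧ y ∈ c ∧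
    (∀ x ∈ c, x ≤ y) ∧ c.card = n}) ⟨1, {y}, by simp⟩ (lenP_bdd y)

lemma lenP_pos (y : Ω) : 1 ≤ lenP y :=
  lenP_le y {y} (by simp) (by simp) (by simp)

lemma lenP_le_max (y : Ω) : lenP y ≤ maxChainCard Ω := by
  obtain ⟨c, hc, -, -, h⟩ := lenP_mem y
  rw [← h]
  refine le_csSup ⟨Fintype.card Ω, ?_⟩ ⟨c, hc, rfl⟩
  rintro n ⟨c, -, rfl⟩
  exact Finset.card_le_univ c

lemma lenP_lt {u v : Ω} (h : u < v) : lenP u < lenP v := by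
  classical
  obtain ⟨c, hc, hy, hle, hcard⟩ := lenP_mem u
  have hv : v ∉ c := fun hv => absurd (hle v hv) (not_le_of_gt h)
  have := lenP_le v (insert v c) (by
    rw [Finset.coe_insert]
    exact hc.insert fun b hb _ => Or.inr ((hle b hb).trans h.le)) (Finset.mem_insert_self _ _)
    (by
      intro x hx
      rcases Finset.mem_insert.1 hx with rfl | hx
      · exact le_rfl
      · exact (hle x hx).trans h.le)
  rw [Finset.card_insert_of_notMem hv] at this
  omega

lemma lenP_iso_le (e : Ω ≃o Ω) (u : Ω) : lenP u ≤ lenP (e u) := by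
  classical
  obtain ⟨c, hc, hy, hle, hcard⟩ := lenP_mem u
  rw [← hcard, ← Finset.card_map e.toEquiv.toEmbedding]
  refine lenP_le _ _ ?_ ?_ ?_
  · intro x hx y hy hxy
    simp only [Finset.coe_map, Set.mem_image] at hx hy
    obtain ⟨x, hx, rfl⟩ := hx
    obtain ⟨y, hy, rfl⟩ := hy
    have := hc hx hy (by rintro rfl; exact hxy rfl)
    simpa using this
  · simpa using hy
  · intro x hx
    simp only [Finset.mem_map] at hx
    obtain ⟨x, hx, rfl⟩ := hx
    simpa using hle x hx

lemma lenP_iso (e : Ω ≃o Ω) (u : Ω) : lenP (e u) = lenP u := by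
  refine le_antisymm ?_ (lenP_iso_le e u)
  simpa using lenP_iso_le e.symm (e u)

lemma hier_iff (h : Hierarchical Ω) (u v : Ω) : u ≤ v ↔ u = v ∨ lenP u < lenP v := by
  constructor
  · intro huv
    rcases huv.eq_or_lt with h | h
    · exact Or.inl h
    · exact Or.inr (lenP_lt h)
  · rintro (rfl | hl)
    · exact le_rfl
    · exact h u v hl

/-- total weight of the levels below `r` -/
noncomputable def Tlev (ω : Ω → ℝ) (r : ℕ) : ℝ := by
  classical
  exact ∑ i with lenP i < r, ω i

open Classical in
/-- weight of the level `r` part of the support. -/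
noncomputable def topw {H : Ω → Type*} [∀ i, Zero (H i)] (ω : Ω → ℝ) (r : ℕ) (α : ∀ i, H i) : ℝ :=
  ∑ i with (lenP i = r ∧ α i ≠ 0), ω i

open Classical in
lemma finsum_set (ω : Ω → ℝ) (A : Set Ω) : ∑ᶠ i ∈ A, ω i = ∑ i with i ∈ A, ω i := by
  rw [finsum_mem_eq_finite_toFinset_sum _ (Set.toFinite A)]
  congr 1
  ext; simp

section W
variable {H : Ω → Type*} [∀ i, Zero (H i)] {ω : Ω → ℝ} (hω : ∀ i : Ω, 0 < ω i)
  (hl : ∀ u v : Ω, u ≤ v ↔ u = v ∨ lenP u < lenP v)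
include hω hl

lemma wt_upper (r : ℕ) (α : ∀ i, H i) (hα : ∀ i, r < lenP i → α i = 0) :
    wtw ω α ≤ Tlev ω r + topw ω r α := by
  classical
  unfold wtw Tlev topw
  rw [finsum_set, ← Finset.sum_union]
  · apply Finset.sum_le_sum_of_subset_of_nonneg
    · intro i hi
      simp only [Finset.mem_filter, Finset.mem_univ, true_and, Finset.mem_union] at hi ⊢
      obtain ⟨j, hj, hij⟩ := hi
      have hjr : lenP j ≤ r := by
        by_contra hh
        exact hj (hα j (by omega))
      rcases (hl i j).1 hij with rfl | h
      · rcases hjr.lt_or_eq with h | h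
        · exact Or.inl h
        · exact Or.inr ⟨h, hj⟩
      · left; omega
    · intro i _ _; exact (hω i).le
  · rw [Finset.disjoint_left]
    intro i hi
    simp only [Finset.mem_filter, Finset.mem_univ, true_and] at hi ⊢
    omega

lemma wt_lower (r : ℕ) (α : ∀ i, H i) (k : Ω) (hk : lenP k = r) (hα : α k ≠ 0) :
    Tlev ω r + topw ω r α ≤ wtw ω α := by
  classical
  unfold wtw Tlev topw
  rw [finsum_set, ← Finset.sum_union]
  · apply Finset.sum_le_sum_of_subset_of_nonneg
    · intro i hi
      simp only [Finset.mem_filter, Finset.mem_univ, true_and, Finset.mem_union] at hi ⊢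
      rcases hi with h | h
      · exact ⟨k, hα, (hl i k).2 (Or.inr (by omega))⟩
      · exact ⟨i, h.2, le_rfl⟩
    · intro i _ _; exact (hω i).le
  · rw [Finset.disjoint_left]
    intro i hi
    simp only [Finset.mem_filter, Finset.mem_univ, true_and] at hi ⊢
    omega

lemma topw_ge (r : ℕ) (α : ∀ i, H i) (k : Ω) (hk : lenP k = r) (hα : α k ≠ 0) :
    ω k ≤ topw ω r α := by
  classical
  unfold topw
  exact Finset.single_le_sum (f := ω) (fun i _ => (hω i).le) (by simp [hk, hα])

lemma wt_ge (α : ∀ i, H i) (k : Ω) (hα : α k ≠ 0) : Tlev ω (lenP k) + ω k ≤ wtw ω α :=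
  (add_le_add_right (topw_ge hω hl _ α k rfl hα) _).trans (wt_lower hω hl _ α k rfl hα)

lemma Tlev_mono {r s : ℕ} (h : r ≤ s) : Tlev ω r ≤ Tlev ω s := by
  classical
  unfold Tlev
  apply Finset.sum_le_sum_of_subset_of_nonneg
  · intro i; simp; omega
  · intro i _ _; exact (hω i).le

lemma lev_iff (r : ℕ) (α : ∀ i, H i) : (∀ i, r ≤ lenP i → α i = 0) ↔ wtw ω α ≤ Tlev ω r := by
  classical
  constructor
  · intro h
    have h1 := wt_upper hω hl r α (fun i hi => h i hi.le)
    have : topw ω r α = 0 := by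
      unfold topw
      rw [Finset.filter_false_of_mem, Finset.sum_empty]
      rintro i - ⟨h1, h2⟩
      exact h2 (h i h1.ge)
    linarith
  · intro h i hi
    by_contra hne
    have := wt_ge hω hl α i hne
    have h2 := Tlev_mono hω hl hi
    have := hω i
    linarith

lemma wt_eq_of_lev {H' : Ω → Type*} [∀ i, Zero (H' i)] (α : ∀ i, H i) (α' : ∀ i, H' i)
    (h : ∀ r, (∀ i, r < lenP i → α i = 0) → (∀ i, r < lenP i → α' i = 0) ∧
      ∀ b : ℝ, Set.ncard {i | lenP i = r ∧ ω i = b ∧ α i ≠ 0} =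
        Set.ncard {i | lenP i = r ∧ ω i = b ∧ α' i ≠ 0}) : wtw ω α' = wtw ω α := by
  classical
  by_cases h0 : ∀ i, α i = 0
  · have h0' : ∀ i, α' i = 0 := by
      intro i
      have := (h (lenP i) (fun i _ => h0 i)).2 (ω i)
      simp only [h0, ne_eq, not_true_eq_false, and_false, Set.ofPred_false, Set.ncard_empty] at this
      have := (Set.ncard_eq_zero (Set.toFinite _)).1 this.symm
      by_contra hne
      exact Set.eq_empty_iff_forall_notMem.1 this i ⟨rfl, rfl, hne⟩
    have e1 : hsupp α = ∅ := by ext; simp [hsupp, h0]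
    have e2 : hsupp α' = ∅ := by ext; simp [hsupp, h0']
    simp [wtw, e1, e2]
  · push Not at h0
    obtain ⟨k0, hk0⟩ := h0
    obtain ⟨k, hk, hmax⟩ := Finset.exists_max_image (Finset.univ.filter fun i => α i ≠ 0) lenP
      ⟨k0, by simpa using hk0⟩
    simp only [Finset.mem_filter, Finset.mem_univ, true_and] at hk hmax
    have hα : ∀ i, lenP k < lenP i → α i = 0 := by
      intro i hi
      by_contra hne
      have := hmax i hne
      omega
    obtain ⟨hα', hc⟩ := h _ hα
    have htop : topw ω (lenP k) α' = topw ω (lenP k) α := by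
      unfold topw
      have fib : ∀ (s : Finset Ω), ∑ i ∈ s, ω i =
          ∑ b ∈ Finset.univ.image ω, ((s.filter fun i => ω i = b).card : ℝ) * b := by
        intro s
        rw [← Finset.sum_fiberwise_of_maps_to (s := s) (t := Finset.univ.image ω) (g := ω)
          (fun i _ => Finset.mem_image_of_mem _ (Finset.mem_univ i))]
        refine Finset.sum_congr rfl fun b _ => ?_
        rw [Finset.sum_congr rfl (g := fun _ => b) (fun i hi => (Finset.mem_filter.1 hi).2)]
        simp
      rw [fib, fib]
      refine Finset.sum_congr rfl fun b _ => ?_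
      congr 2
      have := hc b
      rw [Set.ncard_eq_toFinset_card', Set.ncard_eq_toFinset_card'] at this
      rw [Finset.filter_filter, Finset.filter_filter]
      convert this.symm using 2 <;> · ext i; simp; tauto
    obtain ⟨k', hk'1, hk'2⟩ : ∃ k', lenP k' = lenP k ∧ α' k' ≠ 0 := by
      have h1 := hc (ω k)
      have h2 : 0 < Set.ncard {i | lenP i = lenP k ∧ ω i = ω k ∧ α i ≠ 0} :=
        (Set.ncard_pos (Set.toFinite _)).2 ⟨k, rfl, rfl, hk⟩
      rw [h1, Set.ncard_pos (Set.toFinite _)] at h2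
      obtain ⟨k', h⟩ := h2
      exact ⟨k', h.1, h.2.2⟩
    have a1 := wt_upper hω hl _ α hα
    have a2 := wt_upper hω hl _ α' hα'
    have a3 := wt_lower hω hl _ α k rfl hk
    have a4 := wt_lower hω hl _ α' k' hk'1 hk'2
    linarith

end W

section P
variable {S : Type*} [Ring S] {H : Ω → Type*} [∀ i, AddCommGroup (H i)] [∀ i, Module S (H i)]
  {ω : Ω → ℝ} (hω : ∀ i : Ω, 0 < ω i)
  (hl : ∀ u v : Ω, u ≤ v ↔ u = v ∨ lenP u < lenP v)
include hω hl

lemma lev_map {φ : (∀ i, H i) → (∀ i, H i)} {α : ∀ i, H i} (h : wtw ω (φ α) = wtw ω α) {r : ℕ}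
    (hα : ∀ i, r ≤ lenP i → α i = 0) : ∀ i, r ≤ lenP i → φ α i = 0 := by
  rw [lev_iff hω hl, h, ← lev_iff hω hl]
  exact hα

open Classical in
lemma single_image (φ : (∀ i, H i) ≃ₗ[S] (∀ i, H i)) (hφ : ∀ α, wtw ω (φ α) = wtw ω α)
    (i : Ω) (x : H i) (hx : x ≠ 0) :
    ∃ j, lenP j = lenP i ∧ ω j = ω i ∧ φ (Pi.single i x) j ≠ 0 ∧
      ∀ j', lenP j' = lenP i → φ (Pi.single i x) j' ≠ 0 → j' = j := by
  have hφ' : ∀ α, wtw ω (φ.symm α) = wtw ω α := fun α => by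
    rw [← hφ (φ.symm α), φ.apply_symm_apply]
  have hs : ∀ k, lenP i < lenP k → (Pi.single i x : ∀ i, H i) k = 0 := by
    intro k hk
    rw [Pi.single_eq_of_ne]
    rintro rfl; omega
  set y := φ (Pi.single i x) with hy
  have hy0 : ∀ k, lenP i < lenP k → y k = 0 := lev_map hω hl (φ := φ) (hφ _) (r := lenP i + 1) hs
  obtain ⟨j, hj1, hj2⟩ : ∃ j, lenP j = lenP i ∧ y j ≠ 0 := by
    by_contra hcon
    push Not at hcon
    have h1 : ∀ k, lenP i ≤ lenP k → y k = 0 := by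
      intro k hk
      rcases hk.lt_or_eq with h | h
      · exact hy0 k h
      · exact hcon k h.symm
    have h2 := lev_map hω hl (φ := φ.symm) (hφ' y) h1 i le_rfl
    rw [hy, φ.symm_apply_apply, Pi.single_eq_same] at h2
    exact hx h2
  have hwx : wtw ω (Pi.single i x : ∀ i, H i) = Tlev ω (lenP i) + ω i := by
    have e : topw ω (lenP i) (Pi.single i x : ∀ i, H i) = ω i := by
      unfold topw
      rw [Finset.sum_eq_single i]
      · intro b hb hbi
        simp [Pi.single_eq_of_ne hbi] at hb
      · intro h; simp [hx] at h
    rw [← e]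
    exact le_antisymm (wt_upper hω hl _ _ hs) (wt_lower hω hl _ _ i rfl (by simpa using hx))
  have hwy : wtw ω y = Tlev ω (lenP i) + topw ω (lenP i) y :=
    le_antisymm (wt_upper hω hl _ _ hy0) (wt_lower hω hl _ _ j hj1 hj2)
  have htop : topw ω (lenP i) y = ω i := by
    have := hφ (Pi.single i x)
    rw [← hy] at this
    linarith
  have huniq : ∀ j', lenP j' = lenP i → y j' ≠ 0 → j' = j := by
    intro j' h1 h2
    by_contra hne
    set y1 : ∀ i, H i := Pi.single j (y j) with hy1
    set y2 := y - y1 with hy2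
    have hs1 : ∀ k, k ≠ j → y1 k = 0 := fun k hk => Pi.single_eq_of_ne hk _
    have y1j : y1 j = y j := Pi.single_eq_same _ _
    have t1 : topw ω (lenP i) y1 = ω j := by
      unfold topw
      rw [Finset.sum_eq_single j]
      · intro b hb hbi
        simp [hs1 b hbi] at hb
      · intro h; simp [hj1, y1j, hj2] at h
    have t2 : topw ω (lenP i) y = ω j + topw ω (lenP i) y2 := by
      unfold topw
      rw [← Finset.sum_erase_add _ _ (a := j) (by simp [hj1, hj2]), add_comm]
      congr 2
      ext k
      simp only [Finset.mem_erase, Finset.mem_filter, Finset.mem_univ, true_and]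
      by_cases hk : k = j
      · subst hk; simp [hy2, y1j]
      · simp [hk, hy2, hs1 k hk]
    have t3 : ω j' ≤ topw ω (lenP i) y2 := topw_ge hω hl _ _ _ h1 (by simpa [hy2, hs1 j' hne] using h2)
    have l1 : ∀ k, lenP i < lenP k → y1 k = 0 := by
      intro k hk; apply hs1; rintro rfl; omega
    have l2 : ∀ k, lenP i < lenP k → y2 k = 0 := by
      intro k hk; simp [hy2, l1 k hk, hy0 k hk]
    have w1 := wt_upper hω hl _ _ l1
    have w2 := wt_upper hω hl _ _ l2
    have hsum : φ.symm y1 i + φ.symm y2 i = x := by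
      rw [← Pi.add_apply, ← map_add, hy2, add_sub_cancel, hy, φ.symm_apply_apply, Pi.single_eq_same]
    have p1 := hω j
    have p2 := hω j'
    by_cases hc : φ.symm y1 i = 0
    · have : φ.symm y2 i ≠ 0 := by
        intro h; rw [hc, h, add_zero] at hsum; exact hx hsum.symm
      have := wt_ge hω hl _ _ this
      rw [hφ'] at this
      linarith
    · have := wt_ge hω hl _ _ hc
      rw [hφ'] at this
      linarith
  refine ⟨j, hj1, ?_, hj2, huniq⟩
  rw [← htop]
  unfold topw
  rw [Finset.sum_eq_single j]
  · intro b hb hbi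
    simp only [Finset.mem_filter, Finset.mem_univ, true_and] at hb
    exact absurd (huniq b hb.1 hb.2) hbi
  · intro h; simp [hj1, hj2] at h

open Classical in
lemma exists_fn (φ : (∀ i, H i) ≃ₗ[S] (∀ i, H i)) (hφ : ∀ α, wtw ω (φ α) = wtw ω α)
    (hne : ∀ i, ∃ x : H i, x ≠ 0) :
    ∃ g : Ω → Ω, (∀ i, lenP (g i) = lenP i) ∧ (∀ i, ω (g i) = ω i) ∧
      (∀ i (x : H i) j, lenP j = lenP i → φ (Pi.single i x) j ≠ 0 → j = g i) := by
  choose ξ hξ using hne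
  choose g h1 h2 h3 h4 using fun i => single_image hω hl φ hφ i (ξ i) (hξ i)
  refine ⟨g, h1, h2, ?_⟩
  intro i x j hj hx
  by_contra hjg
  have e1 : φ (Pi.single i (ξ i)) j = 0 := by
    by_contra h
    exact hjg (h4 i j hj h)
  have hx0 : x ≠ 0 := by
    rintro rfl; simp at hx
  obtain ⟨j1, -, -, -, u1⟩ := single_image hω hl φ hφ i x hx0
  have e2 : φ (Pi.single i x) (g i) = 0 := by
    by_contra h
    exact hjg ((u1 j hj hx).trans (u1 _ (h1 i) h).symm)
  have ha : φ (Pi.single i (x + ξ i)) = φ (Pi.single i x) + φ (Pi.single i (ξ i)) := by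
    rw [Pi.single_add, map_add]
  have hs : x + ξ i ≠ 0 := by
    intro h
    rw [h] at ha
    have := congrFun ha j
    simp [e1] at this
    exact hx this.symm
  obtain ⟨j2, -, -, -, u2⟩ := single_image hω hl φ hφ i _ hs
  apply hjg
  rw [u2 j hj (by rw [ha]; simpa [e1] using hx), u2 (g i) (h1 i) (by rw [ha]; simpa [e2] using h3 i)]

open Classical in
lemma exists_perm (φ : (∀ i, H i) ≃ₗ[S] (∀ i, H i)) (hφ : ∀ α, wtw ω (φ α) = wtw ω α)
    (hne : ∀ i, ∃ x : H i, x ≠ 0) :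
    ∃ lam : Ω ≃ Ω, (∀ i, lenP (lam i) = lenP i) ∧ (∀ i, ω (lam i) = ω i) ∧
      ∀ r (α : ∀ i, H i), (∀ i, r < lenP i → α i = 0) →
        ∀ i, lenP i = r → (φ α (lam i) ≠ 0 ↔ α i ≠ 0) := by
  have inv : ∀ (φ : (∀ i, H i) ≃ₗ[S] (∀ i, H i)) (hφ : ∀ α, wtw ω (φ α) = wtw ω α)
      (hφ' : ∀ α, wtw ω (φ.symm α) = wtw ω α) (g g' : Ω → Ω)
      (_ : ∀ i, lenP (g i) = lenP i)
      (_ : ∀ i (x : H i) j, lenP j = lenP i → φ (Pi.single i x) j ≠ 0 → j = g i)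
      (_ : ∀ i (x : H i) j, lenP j = lenP i → φ.symm (Pi.single i x) j ≠ 0 → j = g' i),
      ∀ i, g' (g i) = i := by
    intro φ hφ hφ' g g' hgl hg hg' i
    obtain ⟨x, hx⟩ := hne i
    set y := φ (Pi.single i x) with hy
    set y' := y - Pi.single (g i) (y (g i)) with hy'
    have l : ∀ k, lenP i ≤ lenP k → y' k = 0 := by
      intro k hk
      by_cases hkg : k = g i
      · subst hkg; simp [hy']
      · have : y k = 0 := by
          rcases hk.lt_or_eq with h | h
          · refine lev_map hω hl (φ := φ) (hφ _) (r := lenP i + 1) ?_ k h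
            intro k hk
            rw [Pi.single_eq_of_ne]
            rintro rfl; omega
          · by_contra hne
            exact hkg (hg i x k h.symm hne)
        simp [hy', this, Pi.single_eq_of_ne hkg]
    have l2 := lev_map hω hl (φ := φ.symm) (hφ' y') l i le_rfl
    rw [hy', map_sub, hy, φ.symm_apply_apply, Pi.sub_apply, Pi.single_eq_same, sub_eq_zero] at l2
    refine (hg' (g i) (φ (Pi.single i x) (g i)) i (hgl i).symm ?_).symm
    rw [← l2]; exact hx
  have hφ' : ∀ α, wtw ω (φ.symm α) = wtw ω α := fun α => by
    rw [← hφ (φ.symm α), φ.apply_symm_apply]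
  obtain ⟨g, g1, g2, g3⟩ := exists_fn hω hl φ hφ hne
  obtain ⟨g', g1', g2', g3'⟩ := exists_fn hω hl φ.symm hφ' hne
  have i1 := inv φ hφ hφ' g g' g1 g3 g3'
  have i2 := inv φ.symm hφ' (by simpa using hφ) g' g g1' g3' (by simpa using g3)
  refine ⟨⟨g, g', i1, i2⟩, g1, g2, ?_⟩
  intro r α hα i hi
  change φ α (g i) ≠ 0 ↔ _
  set α' := α - Pi.single i (α i) with hα'
  have z : φ α' (g i) = 0 := by
    rw [← Finset.univ_sum_single α', map_sum, Finset.sum_apply]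
    refine Finset.sum_eq_zero fun k _ => ?_
    by_cases hki : k = i
    · subst hki; simp [hα']
    · have hk : α' k = α k := by simp [hα', Pi.single_eq_of_ne hki]
      rw [hk]
      rcases lt_trichotomy (lenP k) r with h | h | h
      · refine lev_map hω hl (φ := φ) (hφ _) (r := r) ?_ (g i) (by rw [g1, hi])
        intro k' hk'
        rw [Pi.single_eq_of_ne]
        rintro rfl; omega
      · by_contra hne
        have := g3 k _ (g i) (by rw [g1, hi, h]) hne
        apply hki
        rw [← i1 k, ← this, i1]
      · rw [hα k h]; simp
  have e : φ α (g i) = φ (Pi.single i (α i)) (g i) := by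
    rw [hα', map_sub, Pi.sub_apply, sub_eq_zero] at z
    exact z
  rw [e]
  constructor
  · intro h h0; rw [h0] at h; simp at h
  · intro h h0
    obtain ⟨j, j1, -, j3, -⟩ := single_image hω hl φ hφ i (α i) h
    rw [g3 i _ j j1 j3] at j3
    exact j3 h0

end P

section Q
variable {S : Type*} [Ring S] {H : Ω → Type*} [∀ i, AddCommGroup (H i)] [∀ i, Module S (H i)]
  {ω : Ω → ℝ}

/-- restriction to a class -/
def resK (S : Type*) [Ring S] (H : Ω → Type*) [∀ i, AddCommGroup (H i)] [∀ i, Module S (H i)]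
    (P : Ω → Prop) : (∀ i, H i) →ₗ[S] (∀ i : {i // P i}, H i.1) :=
  LinearMap.pi fun k => LinearMap.proj k.1

lemma resK_apply (P : Ω → Prop) (α : ∀ i, H i) (k : {i // P i}) : resK S H P α k = α k.1 := rfl

open Classical in
/-- extension by zero from a class -/
noncomputable def extK (S : Type*) [Ring S] (H : Ω → Type*) [∀ i, AddCommGroup (H i)] [∀ i, Module S (H i)]
    (P : Ω → Prop) : (∀ i : {i // P i}, H i.1) →ₗ[S] (∀ i, H i) :=
  LinearMap.pi fun i => if h : P i then LinearMap.proj (⟨i, h⟩ : {i // P i}) else 0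

lemma extK_pos (P : Ω → Prop) (x : ∀ i : {i // P i}, H i.1) (i : Ω) (h : P i) :
    extK S H P x i = x ⟨i, h⟩ := by
  simp [extK, h]

lemma extK_neg (P : Ω → Prop) (x : ∀ i : {i // P i}, H i.1) (i : Ω) (h : ¬ P i) :
    extK S H P x i = 0 := by
  simp [extK, h]

lemma hwt_sub (P : Ω → Prop) (x : ∀ i : {i // P i}, H i.1) (α : ∀ i, H i)
    (h : ∀ k, x k ≠ 0 ↔ α k.1 ≠ 0) :
    hwtPi x = Set.ncard {i | P i ∧ α i ≠ 0} := by
  unfold hwtPi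
  rw [← Set.ncard_image_of_injective _ Subtype.val_injective]
  congr 1
  ext i
  simp only [Set.mem_image, Set.mem_ofPred_eq, Subtype.exists, exists_and_right, exists_eq_right]
  constructor
  · rintro ⟨hP, hx⟩; exact ⟨hP, (h _).1 hx⟩
  · rintro ⟨hP, hx⟩; exact ⟨hP, (h ⟨i, hP⟩).2 hx⟩

lemma hwt_res (P : Ω → Prop) (α : ∀ i, H i) :
    hwtPi (resK S H P α) = Set.ncard {i | P i ∧ α i ≠ 0} :=
  hwt_sub P _ α fun _ => Iff.rfl

lemma hwt_zero {ι : Type*} [Finite ι] {N : ι → Type*} [∀ j, Zero (N j)] (x : ∀ j, N j) :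
    hwtPi x = 0 ↔ x = 0 := by
  unfold hwtPi
  rw [Set.ncard_eq_zero (Set.toFinite _), Set.eq_empty_iff_forall_notMem, funext_iff]
  simp

lemma mepham_gen {ι : Type*} [Finite ι] {N : ι → Type*} [∀ j, AddCommGroup (N j)]
    [∀ j, Module S (N j)] (h : MEPHam S N) {M : Type*} [AddCommGroup M] [Module S M]
    (p q : M →ₗ[S] ∀ j, N j) (hpq : ∀ m, hwtPi (q m) = hwtPi (p m)) :
    ∃ ψ : (∀ j, N j) ≃ₗ[S] (∀ j, N j),
      (∀ α : ∀ j, N j, hwtPi (ψ α) = hwtPi α) ∧ ∀ m, ψ (p m) = q m := by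
  obtain ⟨g, hg⟩ := factor_aux p q (fun m hm => by
    rw [← hwt_zero, hpq, hwt_zero]; exact hm)
  obtain ⟨ψ, h1, h2⟩ := h (LinearMap.range p) g (by
    rintro ⟨x, m, rfl⟩
    rw [hg]; exact hpq m)
  exact ⟨ψ, h1, fun m => by rw [← hg, ← h2]⟩

lemma mep_gen (hω : ∀ i : Ω, 0 < ω i)
    (hl : ∀ u v : Ω, u ≤ v ↔ u = v ∨ lenP u < lenP v)
    (h : MEPweight S H ω) {M : Type*} [AddCommGroup M] [Module S M]
    (p q : M →ₗ[S] ∀ j, H j) (hpq : ∀ m, wtw ω (q m) = wtw ω (p m)) :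
    ∃ φ : (∀ j, H j) ≃ₗ[S] (∀ j, H j),
      (∀ α : ∀ j, H j, wtw ω (φ α) = wtw ω α) ∧ ∀ m, φ (p m) = q m := by
  have z : ∀ x : ∀ j, H j, x = 0 ↔ wtw ω x ≤ Tlev ω 0 := by
    intro x
    rw [← lev_iff hω hl, funext_iff]
    simp
  obtain ⟨g, hg⟩ := factor_aux p q (fun m hm => by
    rw [z, hpq, ← z]; exact hm)
  obtain ⟨ψ, h1, h2⟩ := h (LinearMap.range p) g (by
    rintro ⟨x, m, rfl⟩
    rw [hg]; exact hpq m)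
  exact ⟨ψ, h1, fun m => by rw [← hg, ← h2]⟩

lemma udp_card (hl : ∀ u v : Ω, u ≤ v ↔ u = v ∨ lenP u < lenP v)
    (hU : UDP ω) (r : ℕ) (α α' : ∀ i, H i)
    (h : ∀ i, r < lenP i → α i = 0) (h' : ∀ i, r < lenP i → α' i = 0)
    (hw : wtw ω α = wtw ω α') (b : ℝ) :
    Set.ncard {i | (lenP i = r ∧ ω i = b) ∧ α i ≠ 0} =
      Set.ncard {i | (lenP i = r ∧ ω i = b) ∧ α' i ≠ 0} := by
  have idl_idl : ∀ B : Set Ω, IsIdl (idl B) := by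
    rintro B x y hxy ⟨z, hz, hyz⟩
    exact ⟨z, hz, hxy.trans hyz⟩
  have key : ∀ α : ∀ i, H i, (∀ i, r < lenP i → α i = 0) →
      {i | (lenP i = r ∧ ω i = b) ∧ α i ≠ 0} = {i | (lenP i = r ∧ ω i = b) ∧ i ∈ idl (hsupp α)} := by
    intro α h
    ext i
    simp only [Set.mem_ofPred_eq, and_congr_right_iff]
    rintro ⟨hi, -⟩
    constructor
    · intro h0; exact ⟨i, h0, le_rfl⟩
    · rintro ⟨j, hj, hij⟩
      rcases (hl i j).1 hij with rfl | hlt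
      · exact hj
      · exact absurd (h j (by omega)) hj
  obtain ⟨lam, h1, h2⟩ := hU _ _ (idl_idl (hsupp α)) (idl_idl (hsupp α')) hw
  rw [key α h, key α' h', h1, ← Set.ncard_image_of_injective _ lam.injective]
  congr 1
  ext j
  simp only [Set.mem_image, Set.mem_ofPred_eq]
  constructor
  · rintro ⟨i, ⟨⟨a, b⟩, c⟩, rfl⟩
    exact ⟨⟨by rw [lenP_iso, a], by rw [h2, b]⟩, i, c, rfl⟩
  · rintro ⟨⟨a, b⟩, i, c, rfl⟩
    exact ⟨i, ⟨⟨by rw [← lenP_iso lam, a], by rw [← h2, b]⟩, c⟩, rfl⟩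

lemma mep_of_conds (hω : ∀ i : Ω, 0 < ω i)
    (hl : ∀ u v : Ω, u ≤ v ↔ u = v ∨ lenP u < lenP v)
    (hB : CondB S H) (hU : UDP ω)
    (hM : ∀ r b, (∃ i : Ω, lenP i = r ∧ ω i = b) →
          MEPHam S (fun i : {i : Ω // lenP i = r ∧ ω i = b} => H i.1)) : MEPweight S H ω := by
  classical
  intro C f hf
  have h1 : ∀ (r : ℕ) (b : ℝ), ∃ ψ : (∀ k : {i : Ω // lenP i = r ∧ ω i = b}, H k.1) ≃ₗ[S]
      (∀ k : {i : Ω // lenP i = r ∧ ω i = b}, H k.1),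
      (∀ x, hwtPi (ψ x) = hwtPi x) ∧
      ∀ x : C, (∀ i, r < lenP i → (x : ∀ i, H i) i = 0) →
        ψ (resK S H (fun i => lenP i = r ∧ ω i = b) x) =
          resK S H (fun i => lenP i = r ∧ ω i = b) (f x) := by
    intro r b
    by_cases he : ∃ i : Ω, lenP i = r ∧ ω i = b
    · let Cr : Submodule S C :=
        { carrier := {x | ∀ i, r < lenP i → (x : ∀ i, H i) i = 0}
          add_mem' := by
            intro x y hx hy i hi
            simp [hx i hi, hy i hi]
          zero_mem' := by intro i _; rfl
          smul_mem' := by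
            intro a x hx i hi
            simp [hx i hi] }
      obtain ⟨ψ, e1, e2⟩ := mepham_gen (hM r b he) (M := Cr)
        (resK S H (fun i => lenP i = r ∧ ω i = b) ∘ₗ C.subtype ∘ₗ Cr.subtype)
        (resK S H (fun i => lenP i = r ∧ ω i = b) ∘ₗ f ∘ₗ Cr.subtype) (by
          rintro ⟨x, hx⟩
          simp only [LinearMap.comp_apply, Submodule.subtype_apply]
          rw [hwt_res, hwt_res]
          refine udp_card hl hU r _ _ ?_ hx (hf x) b
          exact (lev_iff hω hl (r + 1) (f x)).2 (by
            rw [hf]; exact (lev_iff hω hl (r + 1) _).1 hx))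
      exact ⟨ψ, e1, fun x hx => e2 ⟨x, hx⟩⟩
    · refine ⟨LinearEquiv.refl _ _, fun x => rfl, fun x _ => ?_⟩
      funext k
      exact absurd ⟨k.1, k.2⟩ he
  choose ψ hψ1 hψ2 using h1
  -- assemble
  let glue : (∀ (r : ℕ) (b : ℝ), (∀ k : {i : Ω // lenP i = r ∧ ω i = b}, H k.1) →ₗ[S]
      (∀ k : {i : Ω // lenP i = r ∧ ω i = b}, H k.1)) → ((∀ i, H i) →ₗ[S] (∀ i, H i)) := fun ψ =>
    LinearMap.pi fun i => LinearMap.proj (⟨i, rfl, rfl⟩ : {j : Ω // lenP j = lenP i ∧ ω j = ω i}) ∘ₗ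
      ψ (lenP i) (ω i) ∘ₗ resK S H (fun j => lenP j = lenP i ∧ ω j = ω i)
  have hglue : ∀ ψ r b α, resK S H (fun i => lenP i = r ∧ ω i = b) (glue ψ α) =
      ψ r b (resK S H (fun i => lenP i = r ∧ ω i = b) α) := by
    intro ψ r b α
    funext ⟨k, h1, h2⟩
    subst h1 h2
    rfl
  have hext : ∀ α β : ∀ i, H i, (∀ r b, resK S H (fun i => lenP i = r ∧ ω i = b) α =
      resK S H (fun i => lenP i = r ∧ ω i = b) β) → α = β := by
    intro α β h
    funext i
    exact congrFun (h (lenP i) (ω i)) ⟨i, rfl, rfl⟩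
  let Ψ : (∀ i, H i) ≃ₗ[S] (∀ i, H i) := LinearEquiv.ofLinearMap
    (glue fun r b => (ψ r b).toLinearMap) (glue fun r b => (ψ r b).symm.toLinearMap)
    (by
      refine LinearMap.ext fun α => hext _ _ fun r b => ?_
      rw [LinearMap.comp_apply, hglue (fun r b => (ψ r b).toLinearMap) r b, hglue (fun r b => (ψ r b).symm.toLinearMap) r b]
      simp)
    (by
      refine LinearMap.ext fun α => hext _ _ fun r b => ?_
      rw [LinearMap.comp_apply, hglue (fun r b => (ψ r b).symm.toLinearMap) r b, hglue (fun r b => (ψ r b).toLinearMap) r b]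
      simp)
  have hΨ : ∀ r b α, resK S H (fun i => lenP i = r ∧ ω i = b) (Ψ α) =
      ψ r b (resK S H (fun i => lenP i = r ∧ ω i = b) α) := fun r b α => hglue (fun r b => (ψ r b).toLinearMap) r b α
  have hΨs : ∀ r b α, resK S H (fun i => lenP i = r ∧ ω i = b) (Ψ.symm α) =
      (ψ r b).symm (resK S H (fun i => lenP i = r ∧ ω i = b) α) := fun r b α => hglue (fun r b => (ψ r b).symm.toLinearMap) r b α
  have hΨw : ∀ α, wtw ω (Ψ α) = wtw ω α := by
    intro α
    refine wt_eq_of_lev hω hl _ _ fun r hα => ⟨fun i hi => ?_, fun b => ?_⟩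
    · have e := hΨ (lenP i) (ω i) α
      have e0 : resK S H (fun j => lenP j = lenP i ∧ ω j = ω i) α = 0 := by
        funext k
        exact hα k.1 (by rw [k.2.1]; exact hi)
      rw [e0, map_zero] at e
      exact congrFun e ⟨i, rfl, rfl⟩
    · have e := hψ1 r b (resK S H (fun i => lenP i = r ∧ ω i = b) α)
      rw [← hΨ, hwt_res, hwt_res] at e
      simpa only [and_assoc] using e.symm
  -- the difference
  let δ : C →ₗ[S] (∀ i, H i) := Ψ.symm.toLinearMap ∘ₗ f - C.subtype
  have hδ : ∀ (k : Ω) (x : C), (∀ i, lenP k < lenP i → (x : ∀ i, H i) i = 0) → δ x k = 0 := by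
    intro k x hx
    have e := hΨs (lenP k) (ω k) (f x)
    rw [← hψ2 _ _ x hx, LinearEquiv.symm_apply_apply] at e
    have := congrFun e ⟨k, rfl, rfl⟩
    rw [resK_apply, resK_apply] at this
    simp [δ, this]
  have hD : ∀ k : Ω, ∃ D : (∀ i, H i) →ₗ[S] H k, (∀ x : C, D x = δ x k) ∧
      ∀ α : ∀ i, H i, (∀ i, lenP k < lenP i → α i = 0) → D α = 0 := by
    intro k
    obtain ⟨g, hg⟩ := factor_aux (resK S H (fun i => lenP k < lenP i) ∘ₗ C.subtype)
      (LinearMap.proj k ∘ₗ δ) (by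
        intro x hx
        exact hδ k x fun i hi => congrFun hx ⟨i, hi⟩)
    obtain ⟨G, hG⟩ := relinj_pi (fun i : {i // lenP k < lenP i} => H i.1) (E := H k)
      (fun i A f => hB k i.1 ((hl _ _).2 (Or.inr i.2)) (by
        intro h; have := i.2; rw [← h] at this; omega) A f) _ g
    refine ⟨G ∘ₗ resK S H _, fun x => ?_, fun α hα => ?_⟩
    · exact (hG ⟨_, x, rfl⟩).trans (hg x)
    · have : resK S H (fun i => lenP k < lenP i) α = 0 := by
        funext i; exact hα i.1 i.2
      rw [LinearMap.comp_apply, this, map_zero]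
  choose D hD1 hD2 using hD
  let Δ : Module.End S (∀ i, H i) := LinearMap.pi D
  have hΔ : ∀ α k, Δ α k = D k α := fun _ _ => rfl
  have hnil : IsNilpotent Δ := by
    obtain ⟨N, hN⟩ : ∃ N, ∀ i : Ω, lenP i ≤ N :=
      ⟨_, fun i => lenP_le_max i⟩
    refine ⟨N + 1, ?_⟩
    have : ∀ n (α : ∀ i, H i) k, N + 1 ≤ lenP k + n → (Δ ^ n) α k = 0 := by
      intro n
      induction n with
      | zero => intro α k hk; have := hN k; omega
      | succ n ih =>
        intro α k hk
        rw [pow_succ', Module.End.mul_apply, hΔ]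
        exact hD2 k _ fun i hi => ih α i (by omega)
    refine LinearMap.ext fun α => ?_
    funext k
    exact this _ _ k (by omega)
  have hbij := (Module.End.isUnit_iff _).1 hnil.isUnit_one_add
  let Θ : (∀ i, H i) ≃ₗ[S] (∀ i, H i) := LinearEquiv.ofBijective (1 + Δ) hbij
  have hΘ : ∀ α, Θ α = α + Δ α := fun α => rfl
  have hΘw : ∀ α, wtw ω (Θ α) = wtw ω α := by
    intro α
    refine wt_eq_of_lev hω hl _ _ fun r hα => ?_
    have hz : ∀ k, r ≤ lenP k → Δ α k = 0 := fun k hk => hD2 k α fun i hi => hα i (by omega)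
    refine ⟨fun i hi => ?_, fun b => ?_⟩
    · rw [hΘ, Pi.add_apply, hα i hi, hz i hi.le, add_zero]
    · congr 1
      ext i
      simp only [Set.mem_ofPred_eq, and_congr_right_iff]
      intro hi _
      rw [hΘ, Pi.add_apply, hz i hi.ge, add_zero]
  refine ⟨Θ.trans Ψ, fun α => ?_, fun x => ?_⟩
  · rw [LinearEquiv.trans_apply, hΨw, hΘw]
  · have : Θ (x : ∀ i, H i) = Ψ.symm (f x) := by
      funext k
      rw [hΘ, Pi.add_apply, hΔ, hD1]
      simp [δ]
    rw [LinearEquiv.trans_apply, this, LinearEquiv.apply_symm_apply]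

end Q

section R
variable {S : Type*} [Ring S] {H : Ω → Type*} [∀ i, AddCommGroup (H i)] [∀ i, Module S (H i)]
  {ω : Ω → ℝ} (hω : ∀ i : Ω, 0 < ω i)
  (hl : ∀ u v : Ω, u ≤ v ↔ u = v ∨ lenP u < lenP v)
include hω hl

lemma sup_iff (φ : (∀ i, H i) ≃ₗ[S] (∀ i, H i)) (hφ : ∀ α, wtw ω (φ α) = wtw ω α)
    (lam : Ω ≃ Ω) (h1 : ∀ i, lenP (lam i) = lenP i)
    (h3 : ∀ r (α : ∀ i, H i), (∀ i, r < lenP i → α i = 0) →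
        ∀ i, lenP i = r → (φ α (lam i) ≠ 0 ↔ α i ≠ 0))
    (r : ℕ) (P Q : Ω → Prop) (hP : ∀ i, P i → lenP i = r) (hPQ : ∀ i, Q (lam i) ↔ P i)
    (α : ∀ i, H i) :
    (∀ i, r ≤ lenP i → ¬ P i → α i = 0) ↔ (∀ i, r ≤ lenP i → ¬ Q i → φ α i = 0) := by
  have hQ : ∀ i, Q i → lenP i = r := by
    intro i hi
    rw [← lam.apply_symm_apply i] at hi
    rw [← lam.apply_symm_apply i, h1]
    exact hP _ ((hPQ _).1 hi)
  constructor
  · intro h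
    have hα : ∀ i, r < lenP i → α i = 0 := by
      intro i hi
      exact h i hi.le (fun hp => by have := hP i hp; omega)
    have hα' := lev_map hω hl (φ := φ) (hφ α) (r := r + 1) hα
    intro i hi hq
    rcases hi.lt_or_eq with hlt | heq
    · exact hα' i hlt
    · obtain ⟨k, rfl⟩ := lam.surjective i
      by_contra hne
      rw [h1] at heq
      exact (h3 r α hα k heq.symm).1 hne (h k heq.le (fun hp => hq ((hPQ k).2 hp)))
  · intro h
    have hα' : ∀ i, r < lenP i → φ α i = 0 := by
      intro i hi
      exact h i hi.le (fun hp => by have := hQ i hp; omega)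
    have hα : ∀ i, r < lenP i → α i = 0 :=
      (lev_iff hω hl (r + 1) α).2 (by rw [← hφ]; exact (lev_iff hω hl (r + 1) _).1 hα')
    intro i hi hp
    rcases hi.lt_or_eq with hlt | heq
    · exact hα i hlt
    · by_contra hne
      exact (h3 r α hα i heq.symm).2 hne (h _ (by rw [h1]; exact hi) (fun hq => hp ((hPQ i).1 hq)))

lemma block_iso (φ : (∀ i, H i) ≃ₗ[S] (∀ i, H i)) (hφ : ∀ α, wtw ω (φ α) = wtw ω α)
    (lam : Ω ≃ Ω) (h1 : ∀ i, lenP (lam i) = lenP i)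
    (h3 : ∀ r (α : ∀ i, H i), (∀ i, r < lenP i → α i = 0) →
        ∀ i, lenP i = r → (φ α (lam i) ≠ 0 ↔ α i ≠ 0))
    (r : ℕ) (P Q : Ω → Prop) (hP : ∀ i, P i → lenP i = r) (hPQ : ∀ i, Q (lam i) ↔ P i)
    {X Y : Type*} [AddCommGroup X] [Module S X] [AddCommGroup Y] [Module S Y]
    (ι : X →ₗ[S] (∀ i, H i)) (π : (∀ i, H i) →ₗ[S] X) (ι' : Y →ₗ[S] (∀ i, H i))
    (π' : (∀ i, H i) →ₗ[S] Y)
    (e1 : ∀ x, π (ι x) = x) (e2 : ∀ y, π' (ι' y) = y)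
    (z : ∀ α : ∀ i, H i, (∀ i, P i → α i = 0) → π α = 0)
    (z' : ∀ α : ∀ i, H i, (∀ i, Q i → α i = 0) → π' α = 0)
    (o : ∀ x i, ¬ P i → ι x i = 0) (o' : ∀ y i, ¬ Q i → ι' y i = 0)
    (c : ∀ α i, P i → ι (π α) i = α i) (c' : ∀ α i, Q i → ι' (π' α) i = α i) :
    ∃ τ : X ≃ₗ[S] Y, ∀ x, τ x = π' (φ (ι x)) := by
  have hφ' : ∀ α, wtw ω (φ.symm α) = wtw ω α := fun α => by
    rw [← hφ (φ.symm α), φ.apply_symm_apply]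
  have hQ : ∀ i, Q i → lenP i = r := by
    intro i hi
    rw [← lam.apply_symm_apply i] at hi
    rw [← lam.apply_symm_apply i, h1]
    exact hP _ ((hPQ _).1 hi)
  refine blockEquiv φ (fun α => ∀ i, r ≤ lenP i → α i = 0) ι π ι' π' e1 e2
    (fun v hv => lev_map hω hl (φ := φ) (hφ v) hv)
    (fun v hv => lev_map hω hl (φ := φ.symm) (hφ' v) hv)
    (fun v hv => z v fun i hi => hv i (hP i hi).ge)
    (fun v hv => z' v fun i hi => hv i (hQ i hi).ge) ?_ ?_
  · intro x i hi
    rw [Pi.sub_apply]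
    by_cases hq : Q i
    · rw [c' _ _ hq, sub_self]
    · rw [o' _ _ hq, sub_zero]
      exact (sup_iff hω hl φ hφ lam h1 h3 r P Q hP hPQ (ι x)).1 (fun i _ h => o x i h) i hi hq
  · intro y i hi
    rw [Pi.sub_apply]
    by_cases hp : P i
    · rw [c _ _ hp, sub_self]
    · rw [o _ _ hp, sub_zero]
      exact (sup_iff hω hl φ hφ lam h1 h3 r P Q hP hPQ (φ.symm (ι' y))).2 (fun i _ h => by
        rw [φ.apply_symm_apply]; exact o' y i h) i hi hp

open Classical in
lemma single_iso (φ : (∀ i, H i) ≃ₗ[S] (∀ i, H i)) (hφ : ∀ α, wtw ω (φ α) = wtw ω α)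
    (lam : Ω ≃ Ω) (h1 : ∀ i, lenP (lam i) = lenP i)
    (h3 : ∀ r (α : ∀ i, H i), (∀ i, r < lenP i → α i = 0) →
        ∀ i, lenP i = r → (φ α (lam i) ≠ 0 ↔ α i ≠ 0)) (u v : Ω) (huv : lam u = v) :
    ∃ τ : H u ≃ₗ[S] H v, ∀ x, τ x = φ (Pi.single u x) v := by
  refine block_iso hω hl φ hφ lam h1 h3 (lenP u) (· = u) (· = v) (by rintro i rfl; rfl)
    (fun i => by rw [← huv]; exact lam.injective.eq_iff)
    (LinearMap.single S H u) (LinearMap.proj u) (LinearMap.single S H v) (LinearMap.proj v)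
    (by simp) (by simp) (fun α h => h u rfl) (fun α h => h v rfl)
    (fun x i h => by simp [Pi.single_eq_of_ne h]) (fun x i h => by simp [Pi.single_eq_of_ne h])
    ?_ ?_
  · rintro α i rfl; simp
  · rintro α i rfl; simp

lemma single_wt_eq {P : Ω → Prop} {r : ℕ} (hP : ∀ i, P i → lenP i = r) (α β : ∀ i, H i)
    (hα : ∀ i, ¬ P i → α i = 0) (hβ : ∀ i, ¬ P i → β i = 0)
    (h : ∀ b, Set.ncard {i | P i ∧ ω i = b ∧ α i ≠ 0} = Set.ncard {i | P i ∧ ω i = b ∧ β i ≠ 0}) :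
    wtw ω β = wtw ω α := by
  have h' : ∀ s b, Set.ncard {i | lenP i = s ∧ ω i = b ∧ α i ≠ 0} =
      Set.ncard {i | lenP i = s ∧ ω i = b ∧ β i ≠ 0} := by
    have key : ∀ γ : ∀ i, H i, (∀ i, ¬ P i → γ i = 0) → ∀ s b,
        {i | lenP i = s ∧ ω i = b ∧ γ i ≠ 0} = {i | s = r ∧ P i ∧ ω i = b ∧ γ i ≠ 0} := by
      intro γ hγ s b
      ext i
      simp only [Set.mem_ofPred_eq]
      constructor
      · rintro ⟨a1, a2, a3⟩
        have hp : P i := by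
          by_contra hp; exact a3 (hγ i hp)
        exact ⟨a1.symm.trans (hP i hp), hp, a2, a3⟩
      · rintro ⟨a1, a2, a3⟩
        exact ⟨(hP i a2).trans a1.symm, a3⟩
    intro s b
    rw [key α hα, key β hβ]
    by_cases hs : s = r
    · simpa [hs] using h b
    · simp [hs]
  refine wt_eq_of_lev hω hl α β fun s hs => ⟨fun i hi => ?_, h' s⟩
  have := h' (lenP i) (ω i)
  have e : {k | lenP k = lenP i ∧ ω k = ω i ∧ α k ≠ 0} = ∅ := by
    ext k
    simp only [Set.mem_ofPred_eq, Set.mem_empty_iff_false, iff_false]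
    rintro ⟨a1, -, a3⟩
    exact a3 (hs k (by omega))
  rw [e, Set.ncard_empty, eq_comm, Set.ncard_eq_zero (Set.toFinite _)] at this
  by_contra hne
  exact Set.eq_empty_iff_forall_notMem.1 this i ⟨rfl, rfl, hne⟩

open Classical in
lemma condA_of_mep (hM : MEPweight S H ω) (hne : ∀ i, ∃ x : H i, x ≠ 0) : CondA S H := by
  intro i B h hinj
  by_cases hB : ∀ b : B, b = 0
  · refine ⟨LinearEquiv.refl _ _, fun b => ?_⟩
    rw [hB b]; simp
  push Not at hB
  obtain ⟨b0, hb0⟩ := hB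
  obtain ⟨φ, hφ, hφ2⟩ := mep_gen hω hl hM (M := B) (LinearMap.single S H i ∘ₗ B.subtype)
    (LinearMap.single S H i ∘ₗ h) (by
      intro m
      refine single_wt_eq hω hl (P := (· = i)) (r := lenP i) (by rintro i rfl; rfl) _ _
        (fun k hk => by simp [Pi.single_eq_of_ne hk]) (fun k hk => by simp [Pi.single_eq_of_ne hk]) ?_
      intro b
      congr 1
      ext k
      simp only [Set.mem_ofPred_eq, and_congr_right_iff]
      rintro rfl -
      simp [hinj.eq_iff' (map_zero h)])
  obtain ⟨lam, h1, h2, h3⟩ := exists_perm hω hl φ hφ hne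
  have hli : lam i = i := by
    by_contra hcon
    have := (h3 (lenP i) (Pi.single i (b0 : H i)) (by
      intro k hk
      rw [Pi.single_eq_of_ne]
      rintro rfl; omega) i rfl).2 (by simpa using hb0)
    have e := hφ2 b0
    simp only [LinearMap.comp_apply, LinearMap.coe_single, Submodule.subtype_apply] at e
    rw [e, Pi.single_eq_of_ne hcon] at this
    exact this rfl
  obtain ⟨τ, hτ⟩ := single_iso hω hl φ hφ lam h1 h3 i i hli
  refine ⟨τ, fun b => ?_⟩
  rw [hτ]
  have e := hφ2 b
  simp only [LinearMap.comp_apply, LinearMap.coe_single, Submodule.subtype_apply] at e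
  rw [e, Pi.single_eq_same]

open Classical in
lemma condB_of_mep (hM : MEPweight S H ω) : CondB S H := by
  intro k l hkl hne A f
  have hlt : lenP k < lenP l := ((hl k l).1 hkl).resolve_left hne
  obtain ⟨φ, hφ, hφ2⟩ := mep_gen hω hl hM (M := A) (LinearMap.single S H l ∘ₗ A.subtype)
    (LinearMap.single S H l ∘ₗ A.subtype + LinearMap.single S H k ∘ₗ f) (by
      intro m
      by_cases hm : m = 0
      · subst hm; simp
      refine wt_eq_of_lev hω hl _ _ fun r hr => ?_
      have hrl : lenP l ≤ r := by
        by_contra hcon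
        have := hr l (by omega)
        simp at this
        exact hm this
      have e : ∀ i, r ≤ lenP i → (LinearMap.single S H k (f m)) i = 0 := by
        intro i hi
        rw [LinearMap.coe_single, Pi.single_eq_of_ne]
        rintro rfl; omega
      refine ⟨fun i hi => ?_, fun b => ?_⟩
      · rw [LinearMap.add_apply, Pi.add_apply, hr i hi, zero_add]
        exact e i hi.le
      · congr 1
        ext i
        simp only [Set.mem_ofPred_eq, and_congr_right_iff]
        intro hi _
        rw [LinearMap.add_apply, Pi.add_apply, LinearMap.comp_apply (LinearMap.single S H k),
          e i hi.ge, add_zero])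
  refine ⟨LinearMap.proj k ∘ₗ φ.toLinearMap ∘ₗ LinearMap.single S H l, fun a => ?_⟩
  have e := congrFun (hφ2 a) k
  simpa [Pi.single_eq_of_ne hne] using e

open Classical in
lemma cyc (hM : MEPweight S H ω) (ξ : ∀ i, H i) (hξ : ∀ k l : Ω, ∀ a : S, a • ξ k = 0 ↔ a • ξ l = 0)
    (A B : Set Ω) (hA : A.Nonempty) (hB : B.Nonempty)
    (hAB : (∑ᶠ i ∈ idl A, ω i) = ∑ᶠ i ∈ idl B, ω i) :
    ∃ φ : (∀ j, H j) ≃ₗ[S] (∀ j, H j),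
      (∀ α : ∀ j, H j, wtw ω (φ α) = wtw ω α) ∧
      φ (fun i => if i ∈ A then ξ i else 0) = fun i => if i ∈ B then ξ i else 0 := by
  obtain ⟨a, ha⟩ := hA
  obtain ⟨b, hb⟩ := hB
  have key : ∀ (C : Set Ω) (s : S), hsupp (s • (fun i => if i ∈ C then ξ i else 0 : ∀ i, H i)) =
      if s • ξ a = 0 then ∅ else C := by
    intro C s
    ext i
    simp only [hsupp, Set.mem_ofPred_eq, Pi.smul_apply, smul_ite, smul_zero]
    by_cases hs : s • ξ a = 0
    · simp [hs, (hξ a i s).1 hs]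
    · have : s • ξ i ≠ 0 := fun h => hs ((hξ a i s).2 h)
      simp [hs, this]
  obtain ⟨φ, hφ, hφ2⟩ := mep_gen hω hl hM (M := S)
    (LinearMap.toSpanSingleton S _ (fun i => if i ∈ A then ξ i else 0 : ∀ i, H i))
    (LinearMap.toSpanSingleton S _ (fun i => if i ∈ B then ξ i else 0 : ∀ i, H i)) (by
      intro s
      unfold wtw
      rw [LinearMap.toSpanSingleton_apply, LinearMap.toSpanSingleton_apply, key, key]
      split_ifs
      · rfl
      · exact hAB.symm)
  refine ⟨φ, hφ, ?_⟩
  simpa using hφ2 1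

lemma lev_idl_perm (lam : Ω ≃ Ω) (h1 : ∀ i, lenP (lam i) = lenP i) (a b : Ω) :
    lam a ≤ lam b ↔ a ≤ b := by
  rw [hl, hl, h1, h1, lam.injective.eq_iff]

open Classical in
lemma condD_of_mep (hM : MEPweight S H ω) (ξ : ∀ i, H i) (hξ0 : ∀ i, ξ i ≠ 0)
    (hξ : ∀ k l : Ω, ∀ a : S, a • ξ k = 0 ↔ a • ξ l = 0) : CondD S H ω := by
  have main : ∀ I J : Set Ω, IsIdl I → IsIdl J → I.Nonempty → J.Nonempty →
      (∑ᶠ i ∈ I, ω i) = (∑ᶠ j ∈ J, ω j) → ∃ lam : Ω ≃ Ω, (∀ i, lenP (lam i) = lenP i) ∧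
      (∀ i, ω (lam i) = ω i) ∧ J = lam '' I ∧ ∀ i, Nonempty (H i ≃ₗ[S] H (lam i)) := by
    intro I J hI hJ hIn hJn hIJ
    have hid : ∀ I : Set Ω, IsIdl I → idl I = I := by
      intro I hI
      ext i
      constructor
      · rintro ⟨j, hj, hij⟩; exact hI i j hij hj
      · intro hi; exact ⟨i, hi, le_rfl⟩
    obtain ⟨φ, hφ, hφ2⟩ := cyc hω hl hM ξ hξ I J hIn hJn (by rw [hid I hI, hid J hJ]; exact hIJ)
    obtain ⟨lam, h1, h2, h3⟩ := exists_perm hω hl φ hφ fun i => ⟨ξ i, hξ0 i⟩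
    refine ⟨lam, h1, h2, ?_, fun i => ?_⟩
    · set α : ∀ i, H i := fun i => if i ∈ I then ξ i else 0 with hα
      have hαI : ∀ i, α i ≠ 0 ↔ i ∈ I := by
        intro i; simp [hα, hξ0 i]
      have hβJ : ∀ i, φ α i ≠ 0 ↔ i ∈ J := by
        intro i; rw [hφ2]; simp [hξ0 i]
      obtain ⟨k, hk, hmax⟩ := Finset.exists_max_image (Finset.univ.filter fun i => i ∈ I) lenP
        (by obtain ⟨i, hi⟩ := hIn; exact ⟨i, by simpa using hi⟩)
      simp only [Finset.mem_filter, Finset.mem_univ, true_and] at hk hmax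
      have hα0 : ∀ i, lenP k < lenP i → α i = 0 := by
        intro i hi
        by_contra hne
        have := hmax i ((hαI i).1 hne)
        omega
      have hβ0 := lev_map hω hl (φ := φ) (hφ α) (r := lenP k + 1) hα0
      have htop := h3 (lenP k) α hα0
      have hkJ : lam k ∈ J := (hβJ _).1 ((htop k rfl).2 ((hαI k).2 hk))
      have hiff : ∀ i, lam i ∈ J ↔ i ∈ I := by
        intro i
        rcases lt_trichotomy (lenP i) (lenP k) with h | h | h
        · have a1 : i ∈ I := hI i k ((hl _ _).2 (Or.inr h)) hk
          have a2 : lam i ∈ J := hJ _ _ ((hl _ _).2 (Or.inr (by rw [h1, h1]; exact h))) hkJ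
          exact iff_of_true a2 a1
        · rw [← hαI, ← hβJ]; exact htop i h
        · rw [← hαI, ← hβJ]
          simp [hα0 i h, hβ0 (lam i) (by rw [h1]; exact h)]
      ext j
      obtain ⟨i, rfl⟩ := lam.surjective j
      rw [hiff, lam.injective.mem_set_image]
    · obtain ⟨τ, -⟩ := single_iso hω hl φ hφ lam h1 h3 i _ rfl
      exact ⟨τ⟩
  have pos : ∀ I : Set Ω, I.Nonempty → 0 < ∑ᶠ i ∈ I, ω i := by
    rintro I ⟨i, hi⟩
    rw [finsum_set]
    exact Finset.sum_pos (fun i _ => hω i) ⟨i, by simpa using hi⟩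
  refine ⟨?_, ?_⟩
  · intro I J hI hJ hIJ
    rcases I.eq_empty_or_nonempty with rfl | hIn
    · rcases J.eq_empty_or_nonempty with rfl | hJn
      · exact ⟨OrderIso.refl _, by simp, fun i => rfl⟩
      · have := pos J hJn
        simp at hIJ
        linarith
    · rcases J.eq_empty_or_nonempty with rfl | hJn
      · have := pos I hIn
        simp at hIJ
        linarith
      · obtain ⟨lam, h1, h2, h3, -⟩ := main I J hI hJ hIn hJn hIJ
        exact ⟨⟨lam, fun {a b} => lev_idl_perm hω hl lam h1 a b⟩, h3, h2⟩
  · intro u v huv hw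
    have hIic : ∀ u : Ω, ∑ᶠ i ∈ Set.Iic u, ω i = Tlev ω (lenP u) + ω u := by
      intro u
      rw [finsum_set]
      unfold Tlev
      rw [← Finset.sum_erase_add _ _ (a := u) (by simp)]
      congr 2
      ext i
      simp only [Finset.mem_erase, Finset.mem_filter, Finset.mem_univ, true_and, Set.mem_Iic, hl]
      constructor
      · rintro ⟨a, b⟩; exact b.resolve_left a
      · intro h; exact ⟨by rintro rfl; omega, Or.inr h⟩
    obtain ⟨lam, h1, h2, h3, h4⟩ := main (Set.Iic u) (Set.Iic v)
      (fun a b hab hb => hab.trans hb) (fun a b hab hb => hab.trans hb) ⟨u, le_rfl⟩ ⟨v, le_rfl⟩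
      (by rw [hIic, hIic, huv, hw])
    have hv : v ∈ lam '' Set.Iic u := h3 ▸ (Set.mem_Iic.2 le_rfl)
    obtain ⟨w, hwu, rfl⟩ := hv
    have : w = u := ((hl w u).1 hwu).resolve_right (by rw [huv, h1]; omega)
    subst this
    exact h4 w

lemma ham_of_mep (hM : MEPweight S H ω) (hne : ∀ i, ∃ x : H i, x ≠ 0) (r : ℕ) (b : ℝ)
    (P : Ω → Prop) (hP : ∀ i, P i ↔ lenP i = r ∧ ω i = b) :
    MEPHam S (fun i : {i : Ω // P i} => H i.1) := by
  intro C f hf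
  have hx : ∀ x : (∀ i : {i // P i}, H i.1), hwtPi x = Set.ncard {i | P i ∧ extK S H P x i ≠ 0} :=
    fun x => hwt_sub P x _ fun k => by rw [extK_pos P x k.1 k.2]
  obtain ⟨φ, hφ, hφ2⟩ := mep_gen hω hl hM (M := C) (extK S H P ∘ₗ C.subtype) (extK S H P ∘ₗ f) (by
    intro m
    refine single_wt_eq hω hl (P := P) (r := r) (fun i hi => ((hP i).1 hi).1) _ _
      (fun i hi => extK_neg P _ i hi) (fun i hi => extK_neg P _ i hi) ?_
    intro b'
    have := hf m
    rw [hx, hx] at this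
    by_cases hb : b' = b
    · subst hb
      have e : ∀ γ : ∀ i, H i, {i | P i ∧ ω i = b' ∧ γ i ≠ 0} = {i | P i ∧ γ i ≠ 0} := by
        intro γ; ext i; simp only [hP, Set.mem_ofPred_eq]; tauto
      rw [e, e]
      exact this.symm
    · have e : ∀ γ : ∀ i, H i, {i | P i ∧ ω i = b' ∧ γ i ≠ 0} = ∅ := by
        intro γ; ext i; simp only [hP, Set.mem_ofPred_eq, Set.mem_empty_iff_false, iff_false]
        rintro ⟨⟨-, h1⟩, h2, -⟩
        exact hb (h2.symm.trans h1)
      rw [e, e])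
  obtain ⟨lam, h1, h2, h3⟩ := exists_perm hω hl φ hφ hne
  have hlamP : ∀ i, P (lam i) ↔ P i := by
    intro i; simp only [hP, h1, h2]
  have hrx : ∀ x, resK S H P (extK S H P x) = x := by
    intro x; funext k; rw [resK_apply, extK_pos P x k.1 k.2]
  obtain ⟨τ, hτ⟩ := block_iso hω hl φ hφ lam h1 h3 r P P (fun i hi => ((hP i).1 hi).1) hlamP
    (extK S H P) (resK S H P) (extK S H P) (resK S H P) hrx hrx
    (fun α h => funext fun k => h k.1 k.2) (fun α h => funext fun k => h k.1 k.2)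
    (fun x i hi => extK_neg P x i hi) (fun x i hi => extK_neg P x i hi)
    (fun α i hi => extK_pos P _ i hi) (fun α i hi => extK_pos P _ i hi)
  refine ⟨τ, fun x => ?_, fun x => ?_⟩
  · rw [hτ, hwt_res, hx,
      ← Set.ncard_image_of_injective {i | P i ∧ extK S H P x i ≠ 0} lam.injective]
    congr 1
    ext j
    obtain ⟨i, rfl⟩ := lam.surjective j
    rw [lam.injective.mem_set_image]
    simp only [Set.mem_ofPred_eq, hlamP, and_congr_right_iff]
    intro hi
    refine h3 r _ ?_ i ((hP i).1 hi).1
    intro k hk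
    exact extK_neg P x k fun h => by have := ((hP k).1 h).1; omega
  · rw [hτ]
    have := hφ2 x
    simp only [LinearMap.comp_apply, Submodule.subtype_apply] at this
    rw [this, hrx]

end R

end Aux

theorem stmt17 {Ω : Type*} [Fintype Ω] [Nonempty Ω] [PartialOrder Ω]
    {S : Type*} [Ring S] {H : Ω → Type*} [∀ i, AddCommGroup (H i)] [∀ i, Module S (H i)]
    (ω : Ω → ℝ) (hω : ∀ i : Ω, 0 < ω i)
    (hhier : Hierarchical Ω) (hC : CondC S H) :
    MEPweight S H ω ↔
      CondA S H ∧ CondB S H ∧ CondD S H ω ∧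
        ∀ r ∈ Finset.Icc 1 (maxChainCard Ω), ∀ b : ℝ,
          (∃ i : Ω, lenP i = r ∧ ω i = b) →
          MEPHam S (fun i : {i : Ω // lenP i = r ∧ ω i = b} => H i.1) := by
  have hl := hier_iff hhier
  constructor
  · intro hM
    obtain ⟨ξ, hξ, hξ2⟩ := hC
    have hξ0 : ∀ i, ξ i ≠ 0 := by
      intro i hi
      apply hξ
      funext k
      have := (hξ2 i k 1).1 (by rw [hi, smul_zero])
      simpa using this
    exact ⟨condA_of_mep hω hl hM fun i => ⟨ξ i, hξ0 i⟩, condB_of_mep hω hl hM,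
      condD_of_mep hω hl hM ξ hξ0 hξ2,
      fun r _ b _ => ham_of_mep hω hl hM (fun i => ⟨ξ i, hξ0 i⟩) r b _ fun _ => Iff.rfl⟩
  · rintro ⟨-, hB, hD, hH⟩
    refine mep_of_conds hω hl hB hD.1 ?_
    rintro r b ⟨i, hi, hb⟩
    exact hH r (Finset.mem_Icc.2 ⟨hi ▸ lenP_pos i, hi ▸ lenP_le_max i⟩) b ⟨i, hi, hb⟩
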